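/- Let n ≥ 2, β ≥ 0, and let g : ℝⁿ → [0,∞) be measurable and β-log-concave. For s > 0 set Y(s) := ∫_{ℝⁿ} g(x)^s dx, and when 0 < Y(s) < ∞ let ρ_s(x) := g(x)^s / Y(s). Let T > 0 and T' := T(1 − 1/√n), and suppose Y(1/T), Y(1/T'), and Y(2/T' − 1/T) are all finite and positive. Then ∫_{ℝⁿ} ρ_{1/T'}(x)² / ρ_{1/T}(x) dx ≤ 8 · exp(2β/T'), where the integrand is interpreted as 0 at points where ρ_{1/T}(x) = 0. -/

import Mathlib

open Real MeasureTheory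

open Set Module
open scoped ENNReal Pointwise

/-! Substituting `x ↦ x / s` in `∫ g ^ s` and applying the Prékopa–Leindler inequality shows that
`s ↦ s ^ n * Y s` is log-concave up to a factor `exp (β s)`. The warmness equals
`Y p * Y (2 s - p) / Y s ^ 2` with `p = 1 / T` and `s = 1 / T'`, so log-concavity at the midpoint
`s` of `p` and `2 s - p` bounds it by `exp (2 β s) * (s ^ 2 / (p * (2 s - p))) ^ n`. The cooling
rate makes the last factor `(1 - 1 / n) ^ (-n)`, which is at most `4` for `n ≥ 2`.

The Prékopa–Leindler inequality on `ℝ` is the one-dimensional Brunn–Minkowski inequality applied to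
superlevel sets; by Fubini it passes to products. -/

section PrekopaLeindler

theorem volume_add_volume_le_of_isCompact {K L : Set ℝ} (hK : IsCompact K) (hL : IsCompact L)
    (hKn : K.Nonempty) (hLn : L.Nonempty) : volume K + volume L ≤ volume (K + L) := by
  obtain ⟨x, hxK, hx⟩ := hK.exists_isGreatest hKn
  obtain ⟨y, hyL, hy⟩ := hL.exists_isLeast hLn
  -- The translates `y + K` and `x + L` lie in `K + L` and meet at most at the point `x + y`.
  have hinter : (y +ᵥ K) ∩ (x +ᵥ L) ⊆ {x + y} := by
    rintro _ ⟨⟨k, hk, rfl⟩, l, hl, hkl⟩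
    have := hx hk
    have := hy hl
    simp only [vadd_eq_add, mem_singleton_iff] at hkl ⊢
    linarith
  have hsub : (y +ᵥ K) ∪ (x +ᵥ L) ⊆ K + L := by
    rintro _ (⟨k, hk, rfl⟩ | ⟨l, hl, rfl⟩)
    · exact ⟨k, hk, y, hyL, add_comm k y⟩
    · exact ⟨x, hxK, l, hl, rfl⟩
  have hdisj : AEDisjoint volume (y +ᵥ K) (x +ᵥ L) :=
    measure_mono_null hinter (measure_singleton _)
  calc volume K + volume L = volume (y +ᵥ K) + volume (x +ᵥ L) := by simp only [measure_vadd]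
    _ = volume ((y +ᵥ K) ∪ (x +ᵥ L)) :=
      (measure_union₀ (hL.vadd x).measurableSet.nullMeasurableSet hdisj).symm
    _ ≤ volume (K + L) := measure_mono hsub

theorem volume_add_volume_le_volume_add {A B : Set ℝ} (hA : MeasurableSet A) (hB : MeasurableSet B)
    (hAn : A.Nonempty) (hBn : B.Nonempty) : volume A + volume B ≤ volume (A + B) := by
  obtain ⟨x, hx⟩ := hAn
  obtain ⟨y, hy⟩ := hBn
  rw [hA.measure_eq_iSup_isCompact, hB.measure_eq_iSup_isCompact]
  simp only [iSup_and']
  refine ENNReal.biSup_add_biSup_le' ⟨∅, empty_subset A, isCompact_empty⟩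
    ⟨∅, empty_subset B, isCompact_empty⟩ fun K ⟨hKA, hK⟩ L ⟨hLB, hL⟩ => ?_
  calc volume K + volume L ≤ volume (insert x K) + volume (insert y L) := by
        gcongr <;> exact subset_insert _ _
    _ ≤ volume (insert x K + insert y L) :=
        volume_add_volume_le_of_isCompact (hK.insert x) (hL.insert y) (insert_nonempty x K)
          (insert_nonempty y L)
    _ ≤ volume (A + B) :=
        measure_mono (add_subset_add (insert_subset hx hKA) (insert_subset hy hLB))

theorem volume_ofReal_mul_add_le {A B : Set ℝ} (hA : MeasurableSet A) (hB : MeasurableSet B)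
    (hAn : A.Nonempty) (hBn : B.Nonempty) {a b : ℝ} (ha : 0 ≤ a) (hb : 0 ≤ b) :
    ENNReal.ofReal a * volume A + ENNReal.ofReal b * volume B ≤ volume (a • A + b • B) := by
  simpa only [Measure.addHaar_smul_of_nonneg volume ha, finrank_self, pow_one,
    Measure.addHaar_smul_of_nonneg volume hb] using
    volume_add_volume_le_volume_add (hA.const_smul₀ a) (hB.const_smul₀ b) hAn.smul_set hBn.smul_set

theorem volume_restrict_Ioi_setOf_ofReal_lt (u : ℝ≥0∞) :
    volume.restrict (Ioi 0) {t : ℝ | ENNReal.ofReal t < u} = u := by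
  rw [Measure.restrict_apply (measurableSet_lt ENNReal.measurable_ofReal measurable_const)]
  induction u with
  | top => simp
  | coe u =>
    have : {t : ℝ | ENNReal.ofReal t < u} ∩ Ioi 0 = Ioo 0 (u : ℝ) := by
      ext t
      simp only [mem_inter_iff, mem_ofPred_eq, mem_Ioi, mem_Ioo]
      rw [and_comm]
      refine and_congr_right fun ht => ?_
      rw [ENNReal.ofReal_lt_iff_lt_toReal ht.le ENNReal.coe_ne_top, ENNReal.coe_toReal]
    simp [this]

theorem lintegral_eq_lintegral_measure_ofReal_lt {α : Type*} [MeasurableSpace α] (μ : Measure α)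
    [SFinite μ] {f : α → ℝ≥0∞} (hf : Measurable f) :
    ∫⁻ x, f x ∂μ = ∫⁻ t in Ioi (0 : ℝ), μ {x | ENNReal.ofReal t < f x} := by
  have hS : MeasurableSet {p : α × ℝ | ENNReal.ofReal p.2 < f p.1} :=
    measurableSet_lt (by fun_prop) (by fun_prop)
  calc ∫⁻ x, f x ∂μ
      = ∫⁻ x, volume.restrict (Ioi 0) {t : ℝ | ENNReal.ofReal t < f x} ∂μ := by
        simp only [volume_restrict_Ioi_setOf_ofReal_lt]
    _ = μ.prod (volume.restrict (Ioi 0)) {p : α × ℝ | ENNReal.ofReal p.2 < f p.1} :=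
        (Measure.prod_apply hS).symm
    _ = ∫⁻ t in Ioi (0 : ℝ), μ {x | ENNReal.ofReal t < f x} := Measure.prod_apply_symm hS

variable {a b : ℝ}

theorem lintegral_add_lintegral_le_of_iSup_eq {f g h : ℝ → ℝ≥0∞} (hf : Measurable f)
    (hg : Measurable g) (hh : Measurable h) (ha : 0 ≤ a) (hb : 0 ≤ b)
    (hfg : ⨆ x, f x = ⨆ x, g x) (H : ∀ x y, min (f x) (g y) ≤ h (a • x + b • y)) :
    ENNReal.ofReal a * (∫⁻ x, f x) + ENNReal.ofReal b * ∫⁻ x, g x ≤ ∫⁻ x, h x := by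
  have level_measurable (u : ℝ → ℝ≥0∞) :
      Measurable fun t : ℝ => volume {x | ENNReal.ofReal t < u x} :=
    Antitone.measurable fun s t hst => measure_mono fun x (hx : _ < _) =>
      (ENNReal.ofReal_le_ofReal hst).trans_lt hx
  rw [lintegral_eq_lintegral_measure_ofReal_lt _ hf, lintegral_eq_lintegral_measure_ofReal_lt _ hg,
    lintegral_eq_lintegral_measure_ofReal_lt _ hh, ← lintegral_const_mul _ (level_measurable f),
    ← lintegral_const_mul _ (level_measurable g),
    ← lintegral_add_left ((level_measurable f).const_mul _)]
  refine lintegral_mono fun t => ?_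
  rcases lt_or_ge (ENNReal.ofReal t) (⨆ x, f x) with ht | ht
  · have level_f_nonempty : {x | ENNReal.ofReal t < f x}.Nonempty := lt_iSup_iff.1 ht
    have level_g_nonempty : {x | ENNReal.ofReal t < g x}.Nonempty :=
      lt_iSup_iff.1 (ht.trans_eq hfg)
    refine (volume_ofReal_mul_add_le (measurableSet_lt measurable_const hf)
      (measurableSet_lt measurable_const hg) level_f_nonempty level_g_nonempty ha hb).trans
      (measure_mono ?_)
    rintro _ ⟨_, ⟨x, hx, rfl⟩, _, ⟨y, hy, rfl⟩, rfl⟩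
    exact (lt_min hx hy).trans_le (H x y)
  · have level_f_empty : {x | ENNReal.ofReal t < f x} = ∅ :=
      eq_empty_of_forall_notMem fun x => ((le_iSup f x).trans ht).not_gt
    have level_g_empty : {x | ENNReal.ofReal t < g x} = ∅ :=
      eq_empty_of_forall_notMem fun x => ((le_iSup g x).trans (hfg ▸ ht)).not_gt
    simp [level_f_empty, level_g_empty]

theorem ennreal_geom_mean_le_arith_mean (ha : 0 < a) (hb : 0 < b) (hab : a + b = 1) (u v : ℝ≥0∞) :
    u ^ a * v ^ b ≤ ENNReal.ofReal a * u + ENNReal.ofReal b * v := by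
  have key := ENNReal.young_inequality (u ^ a) (v ^ b) (Real.HolderConjugate.inv_inv ha hb hab)
  rwa [← ENNReal.rpow_mul, ← ENNReal.rpow_mul, mul_inv_cancel₀ ha.ne', mul_inv_cancel₀ hb.ne',
    ENNReal.rpow_one, ENNReal.rpow_one, ENNReal.ofReal_inv_of_pos ha, ENNReal.ofReal_inv_of_pos hb,
    div_eq_mul_inv, div_eq_mul_inv, inv_inv, inv_inv, mul_comm u, mul_comm v] at key

theorem min_le_rpow_mul_rpow (ha : 0 ≤ a) (hb : 0 ≤ b) (hab : a + b = 1) (u v : ℝ≥0∞) :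
    min u v ≤ u ^ a * v ^ b := by
  calc min u v = min u v ^ a * min u v ^ b := by
        rw [← ENNReal.rpow_add_of_nonneg _ _ ha hb, hab, ENNReal.rpow_one]
    _ ≤ u ^ a * v ^ b := by gcongr <;> simp

/-- The **Prékopa–Leindler inequality** with weights `a` and `b` as a property of the measure `μ`;
as such it can be transported along linear maps and tensorized. -/
def SatisfiesPrekopaLeindler {E : Type*} [AddCommMonoid E] [Module ℝ E] [MeasurableSpace E]
    (μ : Measure E) (a b : ℝ) : Prop :=
  ∀ ⦃f g h : E → ℝ≥0∞⦄, Measurable f → Measurable g → Measurable h →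
    (∀ x y, f x ^ a * g y ^ b ≤ h (a • x + b • y)) →
    (∫⁻ x, f x ∂μ) ^ a * (∫⁻ x, g x ∂μ) ^ b ≤ ∫⁻ x, h x ∂μ

theorem rpow_mul_rpow_lintegral_le_of_iSup_ne_top {f g h : ℝ → ℝ≥0∞} (hf : Measurable f)
    (hg : Measurable g) (hh : Measurable h) (ha : 0 < a) (hb : 0 < b) (hab : a + b = 1)
    (hftop : ⨆ x, f x ≠ ∞) (hgtop : ⨆ x, g x ≠ ∞)
    (H : ∀ x y, f x ^ a * g y ^ b ≤ h (a • x + b • y)) :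
    (∫⁻ x, f x) ^ a * (∫⁻ x, g x) ^ b ≤ ∫⁻ x, h x := by
  set P := ⨆ x, f x with hP
  set Q := ⨆ x, g x with hQ
  rcases eq_or_ne P 0 with hP0 | hP0
  · have : ∀ x, f x = 0 := by simpa [hP] using hP0
    simp [this, ha]
  rcases eq_or_ne Q 0 with hQ0 | hQ0
  · have : ∀ x, g x = 0 := by simpa [hQ] using hQ0
    simp [this, hb]
  have scale (u v : ℝ≥0∞) : (Q * u) ^ a * (P * v) ^ b = Q ^ a * P ^ b * (u ^ a * v ^ b) := by
    rw [ENNReal.mul_rpow_of_nonneg _ _ ha.le, ENNReal.mul_rpow_of_nonneg _ _ hb.le]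
    ring
  -- After multiplication by `Q` and `P`, both functions have supremum `P * Q`.
  have hsup : ⨆ x, Q * f x = ⨆ x, P * g x := by
    rw [← ENNReal.mul_iSup, ← ENNReal.mul_iSup, ← hP, ← hQ, mul_comm]
  have harith := lintegral_add_lintegral_le_of_iSup_eq (hf.const_mul Q) (hg.const_mul P)
    (hh.const_mul (Q ^ a * P ^ b)) ha.le hb.le hsup fun x y => calc
      min (Q * f x) (P * g y) ≤ (Q * f x) ^ a * (P * g y) ^ b :=
        min_le_rpow_mul_rpow ha.le hb.le hab _ _
      _ ≤ Q ^ a * P ^ b * h (a • x + b • y) := by rw [scale]; gcongr; exact H x y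
  have hgeom := (ennreal_geom_mean_le_arith_mean ha hb hab _ _).trans harith
  rw [lintegral_const_mul _ hf, lintegral_const_mul _ hg, lintegral_const_mul _ hh, scale] at hgeom
  refine (ENNReal.mul_le_mul_iff_right ?_ ?_).1 hgeom
  · simp [hP0, hQ0, hftop, hgtop]
  · finiteness

theorem iSup_lintegral_min_natCast {α : Type*} [MeasurableSpace α] (μ : Measure α)
    {f : α → ℝ≥0∞} (hf : Measurable f) : ⨆ N : ℕ, ∫⁻ x, min (f x) N ∂μ = ∫⁻ x, f x ∂μ := by
  rw [← lintegral_iSup (fun N => hf.min measurable_const) fun M N hMN x => by dsimp only; gcongr]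
  simp only [← inf_iSup_eq, ENNReal.iSup_natCast, le_top, inf_of_le_left]

namespace SatisfiesPrekopaLeindler

protected theorem real (ha : 0 < a) (hb : 0 < b) (hab : a + b = 1) :
    SatisfiesPrekopaLeindler (volume : Measure ℝ) a b := by
  intro f g h hf hg hh H
  have rpow_lintegral_eq_iSup {c : ℝ} (hc : 0 < c) {u : ℝ → ℝ≥0∞} (hu : Measurable u) :
      (∫⁻ x, u x) ^ c = ⨆ N : ℕ, (∫⁻ x, min (u x) N) ^ c := by
    rw [← iSup_lintegral_min_natCast _ hu]
    exact (ENNReal.orderIsoRpow c hc).map_iSup _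
  rw [rpow_lintegral_eq_iSup ha hf, rpow_lintegral_eq_iSup hb hg]
  simp only [ENNReal.iSup_mul, ENNReal.mul_iSup]
  refine iSup₂_le fun N M => ?_
  refine rpow_mul_rpow_lintegral_le_of_iSup_ne_top (hf.min measurable_const)
    (hg.min measurable_const) hh ha hb hab
    (ne_top_of_le_ne_top (ENNReal.natCast_ne_top M) (iSup_le fun _ => min_le_right _ _))
    (ne_top_of_le_ne_top (ENNReal.natCast_ne_top N) (iSup_le fun _ => min_le_right _ _))
    fun x y => le_trans ?_ (H x y)
  gcongr <;> exact min_le_left _ _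

variable {E F : Type*} [AddCommMonoid E] [Module ℝ E] [MeasurableSpace E]
  [AddCommMonoid F] [Module ℝ F] [MeasurableSpace F] {μ : Measure E} {ν : Measure F}

protected theorem prod [SFinite ν] (hμ : SatisfiesPrekopaLeindler μ a b)
    (hν : SatisfiesPrekopaLeindler ν a b) : SatisfiesPrekopaLeindler (μ.prod ν) a b := by
  intro f g h hf hg hh H
  rw [lintegral_prod _ hf.aemeasurable, lintegral_prod _ hg.aemeasurable,
    lintegral_prod _ hh.aemeasurable]
  exact hμ hf.lintegral_prod_right' hg.lintegral_prod_right' hh.lintegral_prod_right' fun x x' =>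
    hν (by fun_prop) (by fun_prop) (by fun_prop) fun y y' => H (x, y) (x', y')

theorem of_measurePreserving (hμ : SatisfiesPrekopaLeindler μ a b) (L : E →ₗ[ℝ] F)
    (hL : MeasurePreserving L μ ν) : SatisfiesPrekopaLeindler ν a b := by
  intro f g h hf hg hh H
  rw [← hL.lintegral_comp hf, ← hL.lintegral_comp hg, ← hL.lintegral_comp hh]
  refine hμ (hf.comp hL.measurable) (hg.comp hL.measurable) (hh.comp hL.measurable) fun x y => ?_
  simpa using H (L x) (L y)

theorem smul_measure (hμ : SatisfiesPrekopaLeindler μ a b) (ha : 0 ≤ a) (hb : 0 ≤ b)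
    (hab : a + b = 1) (c : ℝ≥0∞) : SatisfiesPrekopaLeindler (c • μ) a b := by
  intro f g h hf hg hh H
  simp only [lintegral_smul_measure, smul_eq_mul]
  calc (c * ∫⁻ x, f x ∂μ) ^ a * (c * ∫⁻ x, g x ∂μ) ^ b
      = c ^ (a + b) * ((∫⁻ x, f x ∂μ) ^ a * (∫⁻ x, g x ∂μ) ^ b) := by
        rw [ENNReal.mul_rpow_of_nonneg _ _ ha, ENNReal.mul_rpow_of_nonneg _ _ hb,
          ENNReal.rpow_add_of_nonneg _ _ ha hb]
        ring
    _ ≤ c * ∫⁻ x, h x ∂μ := by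
        rw [hab, ENNReal.rpow_one]
        gcongr
        exact hμ hf hg hh H

protected theorem pi (ha : 0 < a) (hb : 0 < b) (hab : a + b = 1) (n : ℕ) :
    SatisfiesPrekopaLeindler (volume : Measure (Fin n → ℝ)) a b := by
  induction n with
  | zero =>
    intro f g h _ _ _ H
    have volume_univ : volume (univ : Set (Fin 0 → ℝ)) = 1 := by simp [volume_pi]
    simp only [lintegral_unique, volume_univ, mul_one]
    exact (H _ _).trans_eq (congrArg h (Subsingleton.elim _ _))
  | succ n ih =>
    let cons := (Fin.consLinearEquiv ℝ fun _ : Fin (n + 1) => ℝ).toLinearMap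
    have cons_preserving : MeasurePreserving cons := by
      convert (volume_preserving_piFinSuccAbove (fun _ : Fin (n + 1) => ℝ) 0).symm using 1
      ext p i
      simp [cons]
    exact ((SatisfiesPrekopaLeindler.real ha hb hab).prod ih).of_measurePreserving cons
      cons_preserving

end SatisfiesPrekopaLeindler

variable {E : Type*} [NormedAddCommGroup E] [NormedSpace ℝ E] [FiniteDimensional ℝ E]
  [MeasurableSpace E] [BorelSpace E]

theorem satisfiesPrekopaLeindler_of_isAddHaarMeasure (μ : Measure E) [μ.IsAddHaarMeasure]
    (ha : 0 < a) (hb : 0 < b) (hab : a + b = 1) : SatisfiesPrekopaLeindler μ a b := by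
  let e : (Fin (finrank ℝ E) → ℝ) ≃L[ℝ] E := (finBasis ℝ E).equivFunL.symm
  have : (volume.map e).IsAddHaarMeasure := e.isAddHaarMeasure_map volume
  rw [Measure.isAddLeftInvariant_eq_smul μ (volume.map e)]
  exact ((SatisfiesPrekopaLeindler.pi ha hb hab _).of_measurePreserving e.toLinearMap
    (e.continuous.measurable.measurePreserving volume)).smul_measure ha.le hb.le hab _

end PrekopaLeindler

section Annealing

/-- Up to the factor `exp (-β)`, the function `g` is log-concave; this is what the paper calls
`β`-log-concave. -/
def IsAlmostLogConcave {E : Type*} [Add E] [SMul ℝ E] (β : ℝ) (g : E → ℝ) : Prop :=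
  ∀ x y : E, ∀ l : ℝ, l ∈ Icc (0 : ℝ) 1 →
    Real.exp (-β) * g x ^ l * g y ^ (1 - l) ≤ g (l • x + (1 - l) • y)

theorem SatisfiesPrekopaLeindler.rpow_integral_mul_rpow_integral_le {E : Type*} [AddCommMonoid E]
    [Module ℝ E] [MeasurableSpace E] {μ : Measure E} {a b : ℝ}
    (hμ : SatisfiesPrekopaLeindler μ a b) {f g h : E → ℝ} (ha : 0 ≤ a) (hb : 0 ≤ b)
    (hf : Measurable f) (hg : Measurable g) (hh : Measurable h) (hf0 : 0 ≤ f) (hg0 : 0 ≤ g)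
    (hh0 : 0 ≤ h) (hhi : Integrable h μ) (H : ∀ x y, f x ^ a * g y ^ b ≤ h (a • x + b • y)) :
    (∫ x, f x ∂μ) ^ a * (∫ x, g x ∂μ) ^ b ≤ ∫ x, h x ∂μ := by
  have key := hμ hf.ennreal_ofReal hg.ennreal_ofReal hh.ennreal_ofReal fun x y => by
    rw [ENNReal.ofReal_rpow_of_nonneg (hf0 x) ha, ENNReal.ofReal_rpow_of_nonneg (hg0 y) hb,
      ← ENNReal.ofReal_mul (Real.rpow_nonneg (hf0 x) a)]
    exact ENNReal.ofReal_le_ofReal (H x y)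
  have integral_eq {u : E → ℝ} (hu : Measurable u) (hu0 : 0 ≤ u) :
      ∫ x, u x ∂μ = (∫⁻ x, ENNReal.ofReal (u x) ∂μ).toReal :=
    integral_eq_lintegral_of_nonneg_ae (.of_forall hu0) hu.aestronglyMeasurable
  rw [integral_eq hf hf0, integral_eq hg hg0, integral_eq hh hh0, ENNReal.toReal_rpow,
    ENNReal.toReal_rpow, ← ENNReal.toReal_mul]
  exact ENNReal.toReal_mono hhi.lintegral_lt_top.ne key

theorem IsAlmostLogConcave.rpow_mul_rpow_le {E : Type*} [Add E] [SMul ℝ E] {β : ℝ} {g : E → ℝ}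
    (hg : IsAlmostLogConcave β g) (hg0 : 0 ≤ g) {u v s : ℝ} (hu : 0 ≤ u) (hv : 0 ≤ v)
    (hs : 0 < s) (huv : u + v = s) (x y : E) :
    g x ^ u * g y ^ v ≤ Real.exp (β * s) * g ((u / s) • x + (v / s) • y) ^ s := by
  have hl : 1 - u / s = v / s := by rw [← huv] at hs ⊢; field_simp; ring
  have hlc := hg x y (u / s) ⟨by positivity, (div_le_one hs).2 (by linarith)⟩
  rw [hl, mul_assoc, Real.exp_neg, inv_mul_le_iff₀ (Real.exp_pos β)] at hlc
  have hxy := mul_nonneg (Real.rpow_nonneg (hg0 x) (u / s)) (Real.rpow_nonneg (hg0 y) (v / s))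
  calc g x ^ u * g y ^ v = (g x ^ (u / s) * g y ^ (v / s)) ^ s := by
        rw [Real.mul_rpow (Real.rpow_nonneg (hg0 x) _) (Real.rpow_nonneg (hg0 y) _),
          ← Real.rpow_mul (hg0 x), ← Real.rpow_mul (hg0 y), div_mul_cancel₀ _ hs.ne',
          div_mul_cancel₀ _ hs.ne']
    _ ≤ (Real.exp β * g ((u / s) • x + (v / s) • y)) ^ s := Real.rpow_le_rpow hxy hlc hs.le
    _ = Real.exp (β * s) * g ((u / s) • x + (v / s) • y) ^ s := by
        rw [Real.mul_rpow (Real.exp_pos β).le (hg0 _), Real.exp_mul]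

/-- The annealing distribution `ρ_s ∝ g ^ s` at inverse temperature `s`, as a density with respect
to `μ`. It is the zero function when `g ^ s` is not integrable. -/
noncomputable def annealingDensity {E : Type*} [MeasurableSpace E] (μ : Measure E) (g : E → ℝ)
    (s : ℝ) (x : E) : ℝ :=
  g x ^ s / ∫ y, g y ^ s ∂μ

theorem integral_annealingDensity_sq_div {E : Type*} [MeasurableSpace E] (μ : Measure E)
    {g : E → ℝ} (hg0 : 0 ≤ g) {p s : ℝ} (hp : 0 < p) (hps : p < 2 * s) :
    ∫ x, annealingDensity μ g s x ^ 2 / annealingDensity μ g p x ∂μ =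
      (∫ x, g x ^ p ∂μ) * (∫ x, g x ^ (2 * s - p) ∂μ) / (∫ x, g x ^ s ∂μ) ^ 2 := by
  have rpow_sq_div (x : E) : (g x ^ s) ^ 2 / g x ^ p = g x ^ (2 * s - p) := by
    rcases (hg0 x).eq_or_lt with hx | hx
    · simp only [← hx, Pi.zero_apply, Real.zero_rpow hp.ne', div_zero,
        Real.zero_rpow (sub_pos.2 hps).ne']
    · rw [Real.rpow_sub hx, mul_comm 2 s, Real.rpow_mul hx.le, Real.rpow_two]
  calc ∫ x, annealingDensity μ g s x ^ 2 / annealingDensity μ g p x ∂μ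
      = ∫ x, (∫ y, g y ^ p ∂μ) / (∫ y, g y ^ s ∂μ) ^ 2 * g x ^ (2 * s - p) ∂μ := by
        refine integral_congr_ae (.of_forall fun x => ?_)
        simp only [annealingDensity, ← rpow_sq_div]
        rw [div_pow, div_div_div_eq]
        ring
    _ = _ := by rw [integral_const_mul]; ring

theorem sq_div_mul_two_mul_sub_eq {T ε : ℝ} (hT : T ≠ 0) (hε : ε ≠ 1) :
    (1 / (T * (1 - ε))) ^ 2 / (1 / T * (2 * (1 / (T * (1 - ε))) - 1 / T)) = (1 - ε ^ 2)⁻¹ := by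
  have : 1 - ε ≠ 0 := sub_ne_zero.2 hε.symm
  have hq : 2 * (1 / (T * (1 - ε))) - 1 / T = (1 + ε) / (T * (1 - ε)) := by field_simp; ring
  rw [hq, show 1 - ε ^ 2 = (1 - ε) * (1 + ε) by ring]
  field_simp

theorem one_fourth_le_one_sub_inv_pow {n : ℕ} (hn : 2 ≤ n) : 1 / 4 ≤ (1 - (n : ℝ)⁻¹) ^ n := by
  have hn' : (2 : ℝ) ≤ n := by exact_mod_cast hn
  have hinv : (n : ℝ)⁻¹ ≤ 1 := inv_le_one_of_one_le₀ (by linarith)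
  have bernoulli := one_add_mul_self_le_rpow_one_add (s := -(n : ℝ)⁻¹) (by linarith)
    (p := n / 2) (by linarith)
  have half_le : 1 / 2 ≤ (1 - (n : ℝ)⁻¹) ^ ((n : ℝ) / 2) := by
    rw [← sub_eq_add_neg] at bernoulli
    refine le_of_eq_of_le ?_ bernoulli
    field_simp
    norm_num
  calc (1 / 4 : ℝ) = (1 / 2) ^ 2 := by norm_num
    _ ≤ ((1 - (n : ℝ)⁻¹) ^ ((n : ℝ) / 2)) ^ 2 := by gcongr
    _ = (1 - (n : ℝ)⁻¹) ^ n := by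
      rw [← Real.rpow_natCast _ 2, ← Real.rpow_mul (by linarith), Nat.cast_ofNat,
        div_mul_cancel₀ _ two_ne_zero, Real.rpow_natCast]

variable {E : Type*} [NormedAddCommGroup E] [NormedSpace ℝ E] [FiniteDimensional ℝ E]
  [MeasurableSpace E] [BorelSpace E] {β p q s : ℝ} {g : E → ℝ} {μ : Measure E}
  [μ.IsAddHaarMeasure]

namespace IsAlmostLogConcave

theorem rpow_integral_mul_rpow_integral_le (hg : IsAlmostLogConcave β g) (hg0 : 0 ≤ g)
    (hgm : Measurable g) {a b : ℝ} (ha : 0 < a) (hb : 0 < b) (hab : a + b = 1)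
    (hp : 0 < p) (hq : 0 < q) (hs : a * p + b * q = s) (hint : Integrable (fun x => g x ^ s) μ) :
    (p ^ finrank ℝ E * ∫ x, g x ^ p ∂μ) ^ a * (q ^ finrank ℝ E * ∫ x, g x ^ q ∂μ) ^ b ≤
      Real.exp (β * s) * (s ^ finrank ℝ E * ∫ x, g x ^ s ∂μ) := by
  have hs0 : 0 < s := by rw [← hs]; positivity
  have integral_dilate {r : ℝ} (hr : 0 < r) :
      ∫ x, g (r⁻¹ • x) ^ r ∂μ = r ^ finrank ℝ E * ∫ x, g x ^ r ∂μ :=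
    Measure.integral_comp_inv_smul_of_nonneg μ (fun x => g x ^ r) hr.le
  have hdilate : Integrable (fun x => g (s⁻¹ • x) ^ s) μ := hint.comp_smul (inv_ne_zero hs0.ne')
  rw [← integral_dilate hp, ← integral_dilate hq, ← integral_dilate hs0, ← integral_const_mul]
  refine (satisfiesPrekopaLeindler_of_isAddHaarMeasure μ ha hb
    hab).rpow_integral_mul_rpow_integral_le ha.le hb.le (by fun_prop) (by fun_prop) (by fun_prop)
    (fun x => Real.rpow_nonneg (hg0 _) _) (fun x => Real.rpow_nonneg (hg0 _) _)
    (fun x => mul_nonneg (Real.exp_pos _).le (Real.rpow_nonneg (hg0 _) _))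
    (hdilate.const_mul _) fun x y => ?_
  have hpoint : s⁻¹ • (a • x + b • y) = (a * p / s) • p⁻¹ • x + (b * q / s) • q⁻¹ • y := by
    simp only [smul_add, smul_smul]
    congr 2 <;> field_simp
  rw [hpoint, ← Real.rpow_mul (hg0 _), ← Real.rpow_mul (hg0 _), mul_comm p, mul_comm q]
  exact hg.rpow_mul_rpow_le hg0 (by positivity) (by positivity) hs0 hs _ _

theorem integral_mul_integral_le (hg : IsAlmostLogConcave β g) (hg0 : 0 ≤ g) (hgm : Measurable g)
    (hp : 0 < p) (hq : 0 < q) (hs : p + q = 2 * s) (hint : Integrable (fun x => g x ^ s) μ) :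
    (∫ x, g x ^ p ∂μ) * ∫ x, g x ^ q ∂μ ≤
      Real.exp (2 * β * s) * (s ^ 2 / (p * q)) ^ finrank ℝ E * (∫ x, g x ^ s ∂μ) ^ 2 := by
  have integral_rpow_nonneg (r : ℝ) : 0 ≤ ∫ x, g x ^ r ∂μ :=
    integral_nonneg fun x => Real.rpow_nonneg (hg0 x) r
  have := integral_rpow_nonneg p
  have := integral_rpow_nonneg q
  have hmid := hg.rpow_integral_mul_rpow_integral_le hg0 hgm one_half_pos one_half_pos
    (add_halves 1) hp hq (by linarith) hint
  rw [← Real.mul_rpow (by positivity) (by positivity), ← Real.sqrt_eq_rpow] at hmid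
  have hsq := (Real.sqrt_le_iff.1 hmid).2
  have hexp : Real.exp (2 * β * s) = Real.exp (β * s) ^ 2 := by
    rw [← Real.exp_nat_mul]; push_cast; ring_nf
  rw [hexp, div_pow, mul_div_assoc', div_mul_eq_mul_div, le_div_iff₀ (by positivity)]
  calc (∫ x, g x ^ p ∂μ) * (∫ x, g x ^ q ∂μ) * (p * q) ^ finrank ℝ E
      = p ^ finrank ℝ E * (∫ x, g x ^ p ∂μ) * (q ^ finrank ℝ E * ∫ x, g x ^ q ∂μ) := by ring
    _ ≤ (Real.exp (β * s) * (s ^ finrank ℝ E * ∫ x, g x ^ s ∂μ)) ^ 2 := hsq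
    _ = _ := by ring

end IsAlmostLogConcave

theorem integral_annealingDensity_sq_div_le (hg : IsAlmostLogConcave β g) (hg0 : 0 ≤ g)
    (hgm : Measurable g) (hp : 0 < p) (hps : p < 2 * s) (hY : 0 < ∫ x, g x ^ s ∂μ) :
    ∫ x, annealingDensity μ g s x ^ 2 / annealingDensity μ g p x ∂μ ≤
      Real.exp (2 * β * s) * (s ^ 2 / (p * (2 * s - p))) ^ finrank ℝ E := by
  rw [integral_annealingDensity_sq_div μ hg0 hp hps, div_le_iff₀ (by positivity)]
  exact hg.integral_mul_integral_le hg0 hgm hp (sub_pos.2 hps) (by ring)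
    (.of_integral_ne_zero hY.ne')

theorem warm_backward_general (hd : 2 ≤ finrank ℝ E) (hgm : Measurable g) (hg0 : 0 ≤ g)
    (hg : IsAlmostLogConcave β g) {T T' : ℝ} (hT : 0 < T)
    (hT' : T' = T * (1 - 1 / √(finrank ℝ E))) (hY : 0 < ∫ x, g x ^ (1 / T') ∂μ) :
    ∫ x, annealingDensity μ g (1 / T') x ^ 2 / annealingDensity μ g (1 / T) x ∂μ ≤
      4 * Real.exp (2 * β / T') := by
  set d := finrank ℝ E
  set ε := 1 / √d
  have hε_sq : ε ^ 2 = (d : ℝ)⁻¹ := by simp [ε]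
  have hε_pos : 0 < ε := by positivity
  have hε_lt : ε < 1 := by
    rw [← sq_lt_one_iff₀ hε_pos.le, hε_sq]
    exact inv_lt_one_of_one_lt₀ (by exact_mod_cast hd)
  have hT'_pos : 0 < T' := hT' ▸ mul_pos hT (sub_pos.2 hε_lt)
  have hT'_lt : T' < T := by rw [hT']; exact mul_lt_of_lt_one_right hT (by linarith)
  have hp_lt : 1 / T < 2 * (1 / T') := by
    linarith [one_div_lt_one_div_of_lt hT'_pos hT'_lt, one_div_pos.2 hT'_pos]
  have hratio : (1 / T') ^ 2 / (1 / T * (2 * (1 / T') - 1 / T)) = (1 - (d : ℝ)⁻¹)⁻¹ := by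
    rw [hT', sq_div_mul_two_mul_sub_eq hT.ne' hε_lt.ne, hε_sq]
  calc ∫ x, annealingDensity μ g (1 / T') x ^ 2 / annealingDensity μ g (1 / T) x ∂μ
      ≤ Real.exp (2 * β * (1 / T')) * ((1 - (d : ℝ)⁻¹)⁻¹) ^ d :=
        hratio ▸ integral_annealingDensity_sq_div_le hg hg0 hgm (one_div_pos.2 hT) hp_lt hY
    _ ≤ Real.exp (2 * β * (1 / T')) * 4 := by
        gcongr
        rw [inv_pow]
        exact inv_le_of_inv_le₀ four_pos (by simpa using one_fourth_le_one_sub_inv_pow hd)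
    _ = 4 * Real.exp (2 * β / T') := by rw [mul_one_div, mul_comm]

end Annealing

/-- Backward warmness for the annealing schedule: `‖ρ_{1/T'}/ρ_{1/T}‖ ≤ 8 exp(2β/T')`
where `T' = T(1 − 1/√n)`. -/
theorem warm_backward (n : ℕ) (hn : 2 ≤ n) (β : ℝ) (hβ : 0 ≤ β)
    (g : (Fin n → ℝ) → ℝ) (hgm : Measurable g) (hg0 : ∀ x, 0 ≤ g x)
    (hlc : ∀ x y : Fin n → ℝ, ∀ l : ℝ, l ∈ Set.Icc (0:ℝ) 1 →
      Real.exp (-β) * g x ^ l * g y ^ (1 - l) ≤ g (l • x + (1 - l) • y))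
    (Y : ℝ → ℝ) (hY : ∀ s, Y s = ∫ x, g x ^ s)
    (T T' : ℝ) (hT : 0 < T) (hT' : T' = T * (1 - 1 / Real.sqrt n))
    (hiT : Integrable (fun x => g x ^ (1 / T)))
    (hiT' : Integrable (fun x => g x ^ (1 / T')))
    (hiTT : Integrable (fun x => g x ^ (2 / T' - 1 / T)))
    (hYT : 0 < Y (1 / T)) (hYT' : 0 < Y (1 / T')) (hYTT : 0 < Y (2 / T' - 1 / T)) :
    ∫ x, (g x ^ (1 / T') / Y (1 / T')) ^ 2 / (g x ^ (1 / T) / Y (1 / T))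
      ≤ 8 * Real.exp (2 * β / T') := by
  obtain rfl : Y = fun s => ∫ x, g x ^ s := funext hY
  exact (warm_backward_general (by simpa using hn) hgm hg0 hlc hT (by simpa using hT')
    hYT').trans (by gcongr; norm_num)
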